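/- If equations (H1), (H2) and (H3) hold on I, then for every s ∈ I one has 0 < λ(s) < 2 and coth²(2α₁(s)) = (λ(s) − 6)²/(4λ(s)(2 − λ(s))). -/

import Mathlib

/-!
Write `p = α₁'`, `q = α₂'` and `C = coth (2 α₁)`. Since `tanh α₁ ≠ coth α₁`, subtracting (H2) from
(H3) gives `p' = p q`, hence `λ = 2 q²`. Differentiating `p² + q² = 1` gives `q (p² + q') = 0`, and
(H1), with `tanh x + coth x = 2 coth (2x)`, becomes `q' - 2 p q C = 2`.

The function `q` has no zero: at a zero one would have `p² = 1` and `q' = 2`, whereas differentiating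
the identity `q (p² + q') = 0` there gives `q' (p² + q') = 0`, that is `6 = 0`. Hence `q' = -p²`
and `2 p q C = -(p² + 2)`. So `p ≠ 0`, which yields `0 < λ < 2`, and squaring with
`q² = λ/2`, `p² = 1 - λ/2` gives the formula for `C²`.
-/

/-- The hyperbolic cotangent `coth x = cosh x / sinh x`. -/
noncomputable def Real.coth (x : ℝ) : ℝ := Real.cosh x / Real.sinh x

lemma hasDerivAt_eq_zero_of_const_on {I : Set ℝ} (hI : IsOpen I) {f : ℝ → ℝ} {f' c s : ℝ}
    (hs : s ∈ I) (hc : ∀ t ∈ I, f t = c) (hf : HasDerivAt f f' s) : f' = 0 := by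
  have he : f =ᶠ[nhds s] fun _ => c := Filter.eventually_of_mem (hI.mem_nhds hs) hc
  exact hf.unique ((hasDerivAt_const s c).congr_of_eventuallyEq he)

lemma tanh_add_coth {x : ℝ} (hx : 0 < Real.sinh x) :
    Real.tanh x + Real.coth x = 2 * Real.coth (2 * x) := by
  have hc := Real.cosh_pos x
  rw [Real.coth, Real.coth, Real.tanh_eq_sinh_div_cosh, Real.cosh_two_mul, Real.sinh_two_mul]
  field_simp
  ring

lemma tanh_ne_coth {x : ℝ} (hx : 0 < Real.sinh x) : Real.tanh x ≠ Real.coth x := by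
  have hc := Real.cosh_pos x
  rw [Real.coth, Real.tanh_eq_sinh_div_cosh, Ne, div_eq_div_iff hc.ne' hx.ne']
  intro h
  nlinarith [Real.cosh_sq x]

/-- if (H1), (H2) and (H3) hold on `I`, then `0 < λ < 2` and
`coth²(2α₁) = (λ − 6)²/(4λ(2 − λ))` on `I`. -/
theorem stmt16
    (I : Set ℝ) (hIopen : IsOpen I) (hIne : I.Nonempty) (hIconn : I.OrdConnected)
    (α₁ α₂ lam : ℝ → ℝ)
    (hα₁ : ContDiff ℝ (⊤ : ℕ∞) α₁) (hα₂ : ContDiff ℝ (⊤ : ℕ∞) α₂) (hlam : ContDiff ℝ (⊤ : ℕ∞) lam)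
    (hunit : ∀ s ∈ I, (deriv α₁ s) ^ 2 + (deriv α₂ s) ^ 2 = 1)
    (hsinh : ∀ s ∈ I, 0 < Real.sinh (α₁ s))
    (hH1 : ∀ s ∈ I, deriv (deriv α₂) s
        - deriv (deriv α₁) s * (Real.tanh (α₁ s) + Real.coth (α₁ s))
        - 2 * (deriv α₁ s) ^ 2 = lam s)
    (hH2 : ∀ s ∈ I, (deriv α₁ s * deriv α₂ s - deriv (deriv α₁) s) * Real.tanh (α₁ s)
        + 2 * (deriv α₂ s) ^ 2 = lam s)
    (hH3 : ∀ s ∈ I, (deriv α₁ s * deriv α₂ s - deriv (deriv α₁) s) * Real.coth (α₁ s)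
        + 2 * (deriv α₂ s) ^ 2 = lam s) :
    ∀ s ∈ I, 0 < lam s ∧ lam s < 2 ∧
      (Real.coth (2 * α₁ s)) ^ 2
        = (lam s - 6) ^ 2 / (4 * lam s * (2 - lam s)) := by
  have smooth_deriv : ∀ f : ℝ → ℝ, ContDiff ℝ (⊤ : ℕ∞) f → ContDiff ℝ (⊤ : ℕ∞) (deriv f) :=
    fun f hf => (contDiff_infty_iff_deriv.1 hf).2
  have hasDeriv : ∀ f : ℝ → ℝ, ContDiff ℝ (⊤ : ℕ∞) f → ∀ s, HasDerivAt f (deriv f s) s :=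
    fun f hf s => ((contDiff_infty_iff_deriv.1 hf).1 s).hasDerivAt
  have dp := hasDeriv _ (smooth_deriv _ hα₁)
  have dq := hasDeriv _ (smooth_deriv _ hα₂)
  have dq' := hasDeriv _ (smooth_deriv _ (smooth_deriv _ hα₂))
  have hp' : ∀ s ∈ I, deriv (deriv α₁) s = deriv α₁ s * deriv α₂ s := by
    intro s hs
    have h : (deriv α₁ s * deriv α₂ s - deriv (deriv α₁) s) *
        (Real.tanh (α₁ s) - Real.coth (α₁ s)) = 0 := by
      linear_combination hH2 s hs - hH3 s hs
    rcases mul_eq_zero.1 h with h | h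
    · linarith
    · exact absurd (sub_eq_zero.1 h) (tanh_ne_coth (hsinh s hs))
  have hlam2 : ∀ s ∈ I, lam s = 2 * (deriv α₂ s) ^ 2 := by
    intro s hs
    rw [← hH2 s hs, hp' s hs]
    ring
  have hqq : ∀ s ∈ I, deriv α₂ s * ((deriv α₁ s) ^ 2 + deriv (deriv α₂) s) = 0 := by
    intro s hs
    have h := hasDerivAt_eq_zero_of_const_on hIopen (f := fun t => deriv α₁ t ^ 2 + deriv α₂ t ^ 2)
      hs hunit (((dp s).fun_pow 2).fun_add ((dq s).fun_pow 2))
    rw [hp' s hs] at h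
    norm_num at h
    linear_combination h / 2
  intro s hs
  have h1 := hH1 s hs
  rw [tanh_add_coth (hsinh s hs), hp' s hs, hlam2 s hs] at h1
  have hu := hunit s hs
  have hq : deriv α₂ s ≠ 0 := by
    intro h0
    have h := hasDerivAt_eq_zero_of_const_on hIopen
      (f := fun t => deriv α₂ t * (deriv α₁ t ^ 2 + deriv (deriv α₂) t))
      hs hqq ((dq s).fun_mul (((dp s).fun_pow 2).fun_add (dq' s)))
    rw [h0] at h h1 hu
    have hp1 : deriv α₁ s ^ 2 = 1 := by linarith
    have hq2 : deriv (deriv α₂) s = 2 := by linarith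
    rw [hp1, hq2] at h
    norm_num at h
  have hq' : deriv (deriv α₂) s = -(deriv α₁ s) ^ 2 := by
    have := (mul_eq_zero.1 (hqq s hs)).resolve_left hq
    linarith
  rw [hq'] at h1
  rw [hlam2 s hs]
  generalize deriv α₁ s = p at *
  generalize deriv α₂ s = q at *
  generalize Real.coth (2 * α₁ s) = C at *
  have hC : 2 * p * q * C = -(p ^ 2 + 2) := by linear_combination -h1 - 2 * hu
  have hp : p ≠ 0 := by
    rintro rfl
    norm_num at hC
  have hp0 : 0 < p ^ 2 := by positivity
  have hq0 : 0 < q ^ 2 := by positivity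
  have e1 : 2 - 2 * q ^ 2 = 2 * p ^ 2 := by linarith
  have e2 : 2 * q ^ 2 - 6 = -2 * (p ^ 2 + 2) := by linarith
  refine ⟨by positivity, by linarith, ?_⟩
  rw [e1, e2, eq_div_iff (by positivity)]
  linear_combination 4 * (2 * p * q * C - (p ^ 2 + 2)) * hC
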